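/- The standardized random variable σ_N^{−1}(X_N − μ_N) converges in distribution, as N → ∞, to a standard Gaussian random variable; moreover the convergence holds with speed O(N^{−1/2}) in the Kolmogorov (sup of CDF difference) metric: sup_{x∈ℝ} |P(σ_N^{−1}(X_N − μ_N) ≤ x) − Φ(x)| = O(N^{−1/2}), where Φ is the standard normal CDF. -/

import Mathlib

/-!
A lemniscate tree on `N` vertices is a rooted nonplane binary tree whose vertices are
bijectively labeled `1,…,N` (here: `Fin N`, with vertex `0` playing the role of label 1)
such that labels strictly increase along every path directed away from the root.
Since children are unordered, such a tree is faithfully encoded by its parent function: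
vertex `0` is the root (it has no parent), every other vertex has a parent with strictly
smaller label, and every vertex has at most two children.
-/
def LemniscateTree (N : ℕ) : Type :=
  {f : Fin N → Option (Fin N) //
    (∀ i : Fin N, f i = none ↔ (i : ℕ) = 0) ∧
    (∀ i j : Fin N, f i = some j → (j : ℕ) < (i : ℕ)) ∧
    (∀ j : Fin N, (Finset.univ.filter fun i => f i = some j).card ≤ 2)}

instance (N : ℕ) : Fintype (LemniscateTree N) := by
  unfold LemniscateTree; infer_instance

/-- The number of vertices of outdegree two (i.e. with exactly two children). -/
def outdegTwoCount {N : ℕ} (T : LemniscateTree N) : ℕ :=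
  (Finset.univ.filter fun j : Fin N =>
    (Finset.univ.filter fun i => T.1 i = some j).card = 2).card

/-- `μ_N`: the mean number of outdegree-two vertices of a uniformly random
lemniscate tree on `N` vertices. -/
noncomputable def lemMean (N : ℕ) : ℝ :=
  (∑ T : LemniscateTree N, (outdegTwoCount T : ℝ)) / (Fintype.card (LemniscateTree N))

/-- `σ_N²`: the variance of the number of outdegree-two vertices of a uniformly
random lemniscate tree on `N` vertices. -/
noncomputable def lemVar (N : ℕ) : ℝ :=
  (∑ T : LemniscateTree N, ((outdegTwoCount T : ℝ) - lemMean N) ^ 2) /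
    (Fintype.card (LemniscateTree N))

open scoped Classical in
/-- The cumulative distribution function of the standardized random variable
`σ_N⁻¹ (X_N − μ_N)`, where `X_N` is the number of outdegree-two vertices of a
uniformly random lemniscate tree on `N` vertices. -/
noncomputable def stdCDF (N : ℕ) (x : ℝ) : ℝ :=
  ((Finset.univ.filter fun T : LemniscateTree N =>
      ((outdegTwoCount T : ℝ) - lemMean N) / Real.sqrt (lemVar N) ≤ x).card : ℝ) /
    (Fintype.card (LemniscateTree N))

/-- The standard Gaussian cumulative distribution function `Φ`. -/
noncomputable def stdGaussianCDF (x : ℝ) : ℝ :=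
  ∫ t in Set.Iic x, Real.exp (-(t ^ 2) / 2) / Real.sqrt (2 * Real.pi)


namespace LemAux

/-- outdegree of a vertex -/
def odeg {N : ℕ} (f : Fin N → Option (Fin N)) (j : Fin N) : ℕ :=
  (Finset.univ.filter fun i => f i = some j).card

lemma sum_odeg {N : ℕ} (T : LemniscateTree (N+1)) : ∑ j, odeg T.1 j = N := by
  have h : ∀ j, odeg T.1 j = ∑ i, if T.1 i = some j then 1 else 0 := by
    intro j; exact Finset.card_filter _ _
  simp only [h]
  rw [Finset.sum_comm, Fin.sum_univ_succ]
  have h0 : T.1 0 = none := (T.2.1 0).2 rfl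
  have h1 : ∀ i : Fin N, (∑ j, if T.1 i.succ = some j then 1 else 0) = 1 := by
    intro i
    have : T.1 i.succ ≠ none := by
      intro h; have := (T.2.1 _).1 h; simp at this
    obtain ⟨j, hj⟩ := Option.ne_none_iff_exists'.1 this
    simp [hj]
  simp [h0, h1]

lemma count_eq {N : ℕ} (T : LemniscateTree N) :
    outdegTwoCount T = ∑ j, if odeg T.1 j = 2 then 1 else 0 := by
  exact Finset.card_filter _ _

lemma count_one {N : ℕ} (T : LemniscateTree (N+1)) :
    (∑ j, if odeg T.1 j = 1 then 1 else 0) + 2 * outdegTwoCount T = N := by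
  rw [count_eq, Finset.mul_sum, ← Finset.sum_add_distrib]
  conv_rhs => rw [← sum_odeg T]
  refine Finset.sum_congr rfl fun j _ => ?_
  have : odeg T.1 j ≤ 2 := T.2.2.2 j
  interval_cases odeg T.1 j <;> simp

lemma count_zero {N : ℕ} (T : LemniscateTree (N+1)) :
    (∑ j, if odeg T.1 j = 0 then 1 else 0) = outdegTwoCount T + 1 := by
  have h1 := count_one T
  have h2 : (∑ j, if odeg T.1 j = 0 then 1 else 0) + (∑ j, if odeg T.1 j = 1 then 1 else 0)
      + outdegTwoCount T = N + 1 := by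
    rw [count_eq, ← Finset.sum_add_distrib, ← Finset.sum_add_distrib]
    trans ∑ j : Fin (N+1), 1
    · refine Finset.sum_congr rfl fun j _ => ?_
      have : odeg T.1 j ≤ 2 := T.2.2.2 j
      interval_cases odeg T.1 j <;> simp
    · simp
  omega

/-- extension of a parent function by a new last vertex attached to `j` -/
def extF {N : ℕ} (f : Fin N → Option (Fin N)) (j : Fin N) : Fin (N+1) → Option (Fin (N+1)) :=
  Fin.lastCases (some j.castSucc) (fun i => (f i).map Fin.castSucc)

@[simp] lemma extF_last {N : ℕ} (f : Fin N → Option (Fin N)) (j : Fin N) :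
    extF f j (Fin.last N) = some j.castSucc := by simp [extF]

@[simp] lemma extF_castSucc {N : ℕ} (f : Fin N → Option (Fin N)) (j i : Fin N) :
    extF f j i.castSucc = (f i).map Fin.castSucc := by simp [extF]

lemma map_castSucc_eq {N : ℕ} (o : Option (Fin N)) (i : Fin N) :
    o.map Fin.castSucc = some i.castSucc ↔ o = some i := by
  cases o <;> simp

lemma odeg_sum {N : ℕ} (f : Fin N → Option (Fin N)) (j : Fin N) :
    odeg f j = ∑ i, if f i = some j then 1 else 0 := by
  exact Finset.card_filter _ _

lemma odeg_ext {N : ℕ} (f : Fin N → Option (Fin N)) (j i : Fin N) :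
    odeg (extF f j) i.castSucc = odeg f i + if j = i then 1 else 0 := by
  rw [odeg_sum, odeg_sum, Fin.sum_univ_castSucc]
  simp [map_castSucc_eq]

lemma odeg_ext_last {N : ℕ} (f : Fin N → Option (Fin N)) (j : Fin N) :
    odeg (extF f j) (Fin.last N) = 0 := by
  rw [odeg_sum, Fin.sum_univ_castSucc]
  simp only [extF_castSucc, extF_last]
  have h : ∀ i, ¬ ((f i).map Fin.castSucc = some (Fin.last N)) := by
    intro i; cases f i <;> simp [Fin.castSucc_ne_last]
  simp [h, Fin.castSucc_ne_last]

/-- extension of a tree -/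
def ext {N : ℕ} (p : {p : LemniscateTree (N+1) × Fin (N+1) // odeg p.1.1 p.2 ≤ 1}) :
    LemniscateTree (N+2) :=
  ⟨extF p.1.1.1 p.1.2, by
    obtain ⟨⟨T, j⟩, hj⟩ := p
    obtain ⟨f, h1, h2, h3⟩ := T
    simp only at hj ⊢
    refine ⟨?_, ?_, ?_⟩
    · intro i
      induction i using Fin.lastCases with
      | last => simp
      | cast i => simp [h1]
    · intro i k
      induction i using Fin.lastCases with
      | last =>
        simp only [extF_last, Option.some.injEq]
        rintro rfl
        simpa using j.is_lt
      | cast i =>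
        simp only [extF_castSucc, Option.map_eq_some_iff]
        rintro ⟨a, ha, rfl⟩
        simpa using h2 i a ha
    · intro k
      change odeg _ _ ≤ 2
      induction k using Fin.lastCases with
      | last => simp [odeg_ext_last]
      | cast k =>
        rw [odeg_ext]
        split_ifs with h
        · subst h; omega
        · exact h3 k⟩

lemma ext_bij {N : ℕ} : Function.Bijective (ext (N := N)) := by
  constructor
  · rintro ⟨⟨⟨f, hf⟩, j⟩, hj⟩ ⟨⟨⟨g, hg⟩, k⟩, hk⟩ h
    have h' : extF f j = extF g k := congrArg Subtype.val h
    have hl := congrFun h' (Fin.last _)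
    simp only [extF_last, Option.some.injEq, Fin.castSucc_inj] at hl
    subst hl
    have : f = g := by
      funext i
      have := congrFun h' i.castSucc
      simp only [extF_castSucc] at this
      exact Option.map_injective (Fin.castSucc_injective _) this
    subst this
    rfl
  · rintro ⟨f, h1, h2, h3⟩
    have hl : f (Fin.last _) ≠ none := by
      intro h; have := (h1 _).1 h; simp at this
    obtain ⟨j', hj'⟩ := Option.ne_none_iff_exists'.1 hl
    have hj'lt := h2 _ _ hj'
    let j : Fin (N+1) := ⟨j', by simpa using hj'lt⟩
    have hjj : j.castSucc = j' := by ext; simp [j]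
    have key : ∀ i : Fin (N+1), ∃ o : Option (Fin (N+1)), o.map Fin.castSucc = f i.castSucc := by
      intro i
      rcases hfi : f i.castSucc with _ | k
      · exact ⟨none, rfl⟩
      · have := h2 _ _ hfi
        refine ⟨some ⟨k, by simp at this; omega⟩, ?_⟩
        simp
    choose g hg using key
    have hfe : f = extF g j := by
      funext i
      induction i using Fin.lastCases with
      | last => simp [hj', hjj]
      | cast i => simp [hg]
    have hT : (∀ i : Fin (N+1), g i = none ↔ (i : ℕ) = 0) ∧
      (∀ i j : Fin (N+1), g i = some j → (j : ℕ) < (i : ℕ)) ∧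
      (∀ j : Fin (N+1), (Finset.univ.filter fun i => g i = some j).card ≤ 2) := by
      refine ⟨?_, ?_, ?_⟩
      · intro i
        have := h1 i.castSucc
        rw [← hg] at this
        simpa using this
      · intro i k hk
        have := h2 i.castSucc k.castSucc (by rw [← hg, hk]; rfl)
        simpa using this
      · intro k
        have := h3 k.castSucc
        change odeg f _ ≤ 2 at this
        change odeg g _ ≤ 2
        rw [hfe, odeg_ext] at this
        omega
    have hd : odeg g j ≤ 1 := by
      have := h3 j.castSucc
      change odeg f _ ≤ 2 at this
      rw [hfe, odeg_ext] at this
      simpa using this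
    refine ⟨⟨⟨⟨g, hT⟩, j⟩, hd⟩, ?_⟩
    apply Subtype.ext
    exact hfe.symm

lemma count_ext {N : ℕ} (p : {p : LemniscateTree (N+1) × Fin (N+1) // odeg p.1.1 p.2 ≤ 1}) :
    outdegTwoCount (ext p) = outdegTwoCount p.1.1 + if odeg p.1.1.1 p.1.2 = 1 then 1 else 0 := by
  obtain ⟨⟨T, j⟩, hj⟩ := p
  simp only at hj ⊢
  rw [count_eq, count_eq, Fin.sum_univ_castSucc]
  simp only [ext, odeg_ext, odeg_ext_last]
  simp only [OfNat.zero_ne_ofNat, if_false, add_zero]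
  have : (if odeg T.1 j = 1 then 1 else 0) = ∑ i, if j = i then
    (if odeg T.1 i = 1 then 1 else 0) else 0 := by simp
  rw [this, ← Finset.sum_add_distrib]
  refine Finset.sum_congr rfl fun i _ => ?_
  by_cases h : j = i
  · subst h
    interval_cases odeg T.1 j <;> simp
  · simp [h]

lemma two_count_le {N : ℕ} (T : LemniscateTree (N+1)) : 2 * outdegTwoCount T ≤ N := by
  have := count_one T; omega

lemma sum_rec {M : Type*} [AddCommMonoid M] (N : ℕ) (g : ℕ → M) :
    ∑ T : LemniscateTree (N+2), g (outdegTwoCount T) =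
    ∑ T : LemniscateTree (N+1), ((outdegTwoCount T + 1) • g (outdegTwoCount T) +
      (N - 2 * outdegTwoCount T) • g (outdegTwoCount T + 1)) := by
  rw [← Function.Bijective.sum_comp ext_bij]
  simp only [count_ext]
  rw [← Finset.sum_subtype (Finset.univ.filter fun p : LemniscateTree (N+1) × Fin (N+1) =>
    odeg p.1.1 p.2 ≤ 1) (by simp) (fun p : LemniscateTree (N+1) × Fin (N+1) =>
      g (outdegTwoCount p.1 + if odeg p.1.1 p.2 = 1 then 1 else 0))]
  rw [Finset.sum_filter, Fintype.sum_prod_type]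
  refine Finset.sum_congr rfl fun T _ => ?_
  have h1 : N - 2 * outdegTwoCount T = ∑ j, if odeg T.1 j = 1 then 1 else 0 := by
    have := count_one T; omega
  have h0 : (outdegTwoCount T + 1) • g (outdegTwoCount T) =
      (∑ j, if odeg T.1 j = 0 then 1 else 0) • g (outdegTwoCount T) := by rw [count_zero]
  rw [h1, h0, Finset.sum_smul, Finset.sum_smul, ← Finset.sum_add_distrib]
  refine Finset.sum_congr rfl fun j _ => ?_
  have : odeg T.1 j ≤ 2 := T.2.2.2 j
  simp only
  interval_cases odeg T.1 j <;> simp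

lemma sum_one {M : Type*} [AddCommMonoid M] (g : ℕ → M) :
    ∑ T : LemniscateTree 1, g (outdegTwoCount T) = g 0 := by
  have h0 : ∀ T : LemniscateTree 1, outdegTwoCount T = 0 := by
    intro T; have := two_count_le T; omega
  have hc : Fintype.card (LemniscateTree 1) = 1 := by
    rw [Fintype.card_eq_one_iff]
    refine ⟨⟨fun _ => none, ?_⟩, ?_⟩
    · simp
    · intro T
      apply Subtype.ext
      funext i
      exact (T.2.1 i).2 (by omega)
  simp [h0, hc]

end LemAux

namespace LemAux
open Polynomial

lemma splits_derivative_real {p : ℝ[X]} (hp : p.Splits) : p.derivative.Splits := by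
  rw [splits_iff_card_roots] at hp ⊢
  have h1 := card_roots_le_derivative p
  have h2 := natDegree_derivative_le p
  have h3 := card_roots' (derivative p)
  omega

/-- the polynomial `(X^2-1)/2` -/
noncomputable def sPol : ℝ[X] := C (1/2) * (X ^ 2 - 1)

lemma sPol_splits : sPol.Splits := by
  have : sPol = C (1/2) * ((X - C 1) * (X - C (-1))) := by
    simp [sPol]; ring
  rw [this]
  exact ((Splits.X_sub_C 1).mul (Splits.X_sub_C (-1))).C_mul _

lemma sPol_derivative : derivative sPol = X := by
  simp only [sPol, derivative_mul, derivative_C, derivative_sub, derivative_X_pow, derivative_one]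
  simp only [zero_mul, zero_add, sub_zero, Nat.cast_ofNat, Nat.add_one_sub_one, pow_one]
  rw [← mul_assoc, ← C_mul]; norm_num

/-- homogenised polynomial -/
noncomputable def Qpol (N : ℕ) : ℝ[X] :=
  ∑ T : LemniscateTree (N+1), X ^ (N - 2 * outdegTwoCount T) * sPol ^ (outdegTwoCount T)

lemma Qpol_succ (N : ℕ) : Qpol (N+1) = derivative (sPol * Qpol N) := by
  unfold Qpol
  rw [sum_rec N (fun k => X ^ (N + 1 - 2 * k) * sPol ^ k), Finset.mul_sum, derivative_sum]
  refine Finset.sum_congr rfl fun T _ => ?_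
  have h := two_count_le T
  generalize outdegTwoCount T = k at *
  obtain ⟨m, rfl⟩ := Nat.exists_eq_add_of_le h
  have e1 : 2 * k + m + 1 - 2 * k = m + 1 := by omega
  have e2 : 2 * k + m - 2 * k = m := by omega
  have e3 : 2 * k + m + 1 - 2 * (k + 1) = m - 1 := by omega
  have e4 : sPol * (X ^ m * sPol ^ k) = X ^ m * sPol ^ (k+1) := by ring
  rw [e1, e2, e3, e4, derivative_mul, derivative_X_pow, derivative_pow, sPol_derivative]
  simp only [nsmul_eq_mul, Nat.add_sub_cancel, map_natCast]
  ring

lemma Qpol_splits (N : ℕ) : (Qpol N).Splits := by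
  induction N with
  | zero =>
    have : Qpol 0 = 1 := by
      unfold Qpol
      rw [sum_one (fun k => X ^ (0 - 2 * k) * sPol ^ k)]
      simp
    rw [this]; exact Splits.one
  | succ n ih =>
    rw [Qpol_succ]
    exact splits_derivative_real (sPol_splits.mul ih)

lemma card_rec (N : ℕ) : (Fintype.card (LemniscateTree (N+2)) : ℝ) =
    ∑ T : LemniscateTree (N+1), ((N : ℝ) + 1 - outdegTwoCount T) := by
  have := sum_rec N (fun _ => (1:ℝ))
  simp only [Finset.sum_const, Finset.card_univ, nsmul_eq_mul, mul_one] at this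
  rw [this]
  refine Finset.sum_congr rfl fun T _ => ?_
  have h := two_count_le T
  push_cast [h]
  ring

lemma two_count_le' {N : ℕ} (T : LemniscateTree (N+1)) : 2 * (outdegTwoCount T : ℝ) ≤ N := by
  exact_mod_cast two_count_le T

lemma card_rec_ge (N : ℕ) : ((N : ℝ) + 2) / 2 * (Fintype.card (LemniscateTree (N+1)) : ℝ) ≤
    (Fintype.card (LemniscateTree (N+2)) : ℝ) := by
  rw [card_rec, mul_comm, ← nsmul_eq_mul, ← Finset.card_univ]
  apply Finset.card_nsmul_le_sum
  intro T _
  have := two_count_le' T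
  linarith

lemma card_rec_le (N : ℕ) : (Fintype.card (LemniscateTree (N+2)) : ℝ) ≤
    ((N : ℝ) + 1) * (Fintype.card (LemniscateTree (N+1)) : ℝ) := by
  rw [card_rec, mul_comm, ← nsmul_eq_mul, ← Finset.card_univ]
  apply Finset.sum_le_card_nsmul
  intro T _
  have : (0:ℝ) ≤ outdegTwoCount T := by positivity
  linarith

lemma card_pos (N : ℕ) : (0 : ℝ) < Fintype.card (LemniscateTree (N+1)) := by
  induction N with
  | zero =>
    have := sum_one (fun _ => (1:ℝ))
    simp only [Finset.sum_const, Finset.card_univ, nsmul_eq_mul, mul_one] at this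
    rw [zero_add, this]; norm_num
  | succ n ih =>
    have := card_rec_ge n
    refine lt_of_lt_of_le ?_ this
    positivity

instance (N : ℕ) : Nonempty (LemniscateTree (N+1)) := by
  rw [← Fintype.card_pos_iff]
  exact_mod_cast card_pos N

lemma Qpol_ne_zero (N : ℕ) : Qpol N ≠ 0 := by
  intro h
  have : (Qpol N).eval 2 = 0 := by rw [h]; simp
  unfold Qpol at this
  rw [eval_finsetSum] at this
  have h2 : 0 < ∑ T : LemniscateTree (N+1),
      eval 2 (X ^ (N - 2 * outdegTwoCount T) * sPol ^ (outdegTwoCount T)) := by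
    apply Finset.sum_pos
    · intro T _
      simp [sPol]
    · exact Finset.univ_nonempty
  linarith

/-- the generating polynomial -/
noncomputable def Ppol (N : ℕ) : ℝ[X] := ∑ T : LemniscateTree (N+1), X ^ (outdegTwoCount T)

lemma Ppol_eval_pos (N : ℕ) {x : ℝ} (hx : 0 < x) : 0 < (Ppol N).eval x := by
  unfold Ppol
  rw [eval_finsetSum]
  apply Finset.sum_pos
  · intro T _
    simp; positivity
  · exact Finset.univ_nonempty

lemma Ppol_splits (N : ℕ) : (Ppol N).Splits := by
  refine Splits.of_splits_map (algebraMap ℝ ℂ) (IsAlgClosed.splits _) ?_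
  intro u hu
  have hu0 := isRoot_of_mem_roots hu
  by_cases h12 : u = 1/2
  · exact ⟨1/2, by simp [h12]⟩
  have h12' : 1 - 2 * u ≠ 0 := by
    intro h; apply h12; linear_combination (-1/2) * h
  obtain ⟨v, hv⟩ := IsAlgClosed.exists_pow_nat_eq (1 - 2 * u)⁻¹ (n := 2) (by norm_num)
  have hv0 : v ≠ 0 := by
    rintro rfl
    have := inv_ne_zero h12'
    rw [← hv] at this; simp at this
  have hv2 : v^2 * (1 - 2*u) = 1 := by rw [hv]; field_simp
  have hQ : ((Qpol N).map (algebraMap ℝ ℂ)).IsRoot v := by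
    have : eval v ((Qpol N).map (algebraMap ℝ ℂ)) = v ^ N * eval u ((Ppol N).map (algebraMap ℝ ℂ)) := by
      unfold Qpol Ppol
      simp only [eval_map_algebraMap, map_sum, Finset.mul_sum]
      refine Finset.sum_congr rfl fun T _ => ?_
      have h := two_count_le T
      generalize outdegTwoCount T = k at *
      obtain ⟨m, rfl⟩ := Nat.exists_eq_add_of_le h
      have e2 : 2 * k + m - 2 * k = m := by omega
      have e3 : aeval v sPol = v^2 * u := by
        simp [sPol]; linear_combination (1/2) * hv2
      rw [e2]
      simp only [map_mul, map_pow, aeval_X, e3]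
      ring
    rw [IsRoot, this, hu0, mul_zero]
  obtain ⟨a, ha⟩ := (Qpol_splits N).mem_range_of_isRoot (Qpol_ne_zero N) hQ
  refine ⟨(1 - (a^2)⁻¹)/2, ?_⟩
  have : u = (1 - (v^2)⁻¹)/2 := by
    field_simp; linear_combination (-1) * hv2
  rw [this, ← ha]
  simp

end LemAux

namespace LemAux
open MeasureTheory Filter Topology Set

/-- standard gaussian density -/
noncomputable def gd (t : ℝ) : ℝ := Real.exp (-(t ^ 2) / 2) / Real.sqrt (2 * Real.pi)

lemma gd_pos (t : ℝ) : 0 < gd t := by unfold gd; positivity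

lemma gd_cont : Continuous gd := by unfold gd; fun_prop

lemma gd_neg (t : ℝ) : gd (-t) = gd t := by simp [gd]

lemma gd_int : Integrable gd := by
  have := integrable_exp_neg_mul_sq (b := 1/2) (by norm_num)
  refine (this.div_const (Real.sqrt (2 * Real.pi))).congr ?_
  filter_upwards with t
  simp only [gd]; congr 2; ring

lemma gd_total : ∫ t, gd t = 1 := by
  have := integral_gaussian (1/2)
  unfold gd
  rw [integral_div]
  have h2 : ∀ t : ℝ, -(t^2)/2 = -(1/2) * t^2 := fun t => by ring
  simp only [h2]
  rw [this]
  have : Real.pi / (1/2) = 2 * Real.pi := by ring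
  rw [this]
  have : 0 < Real.sqrt (2 * Real.pi) := by positivity
  field_simp

lemma gd_deriv (t : ℝ) : HasDerivAt gd (-t * gd t) t := by
  unfold gd
  have h1 : HasDerivAt (fun t : ℝ => -(t^2)/2) (-t) t := by
    have := ((hasDerivAt_pow 2 t).neg).div_const 2
    refine this.congr_deriv ?_
    simp; ring
  have := (h1.exp).div_const (Real.sqrt (2 * Real.pi))
  refine this.congr_deriv ?_
  ring


lemma Phi_eq (x : ℝ) : stdGaussianCDF x = ∫ t in Iic x, gd t := rfl

lemma Phi_sub (a b : ℝ) : stdGaussianCDF b - stdGaussianCDF a = ∫ t in a..b, gd t := by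
  rw [Phi_eq, Phi_eq, intervalIntegral.integral_Iic_sub_Iic] <;> exact gd_int.integrableOn

lemma Phi_deriv (x : ℝ) : HasDerivAt stdGaussianCDF (gd x) x := by
  have h : stdGaussianCDF = fun x => stdGaussianCDF 0 + ∫ t in (0:ℝ)..x, gd t := by
    funext x; rw [← Phi_sub]; ring
  rw [h]
  have := (intervalIntegral.integral_hasDerivAt_right (gd_cont.intervalIntegrable 0 x)
    (gd_cont.stronglyMeasurableAtFilter _ _) gd_cont.continuousAt)
  exact this.const_add _

lemma Phi_atBot : Tendsto stdGaussianCDF atBot (𝓝 0) := by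
  have := intervalIntegral_tendsto_integral_Iic (0:ℝ) (f := gd) gd_int.integrableOn
    (tendsto_id (α := ℝ) (x := atBot))
  simp only [id, ← Phi_sub, ← Phi_eq] at this
  have h2 := this.const_sub (stdGaussianCDF 0)
  simpa using h2

lemma Phi_mono : StrictMono stdGaussianCDF :=
  strictMono_of_hasDerivAt_pos Phi_deriv gd_pos

lemma Phi_pos (x : ℝ) : 0 < stdGaussianCDF x := by
  have h : 0 ≤ stdGaussianCDF (x - 1) := integral_nonneg fun t => (gd_pos t).le
  exact lt_of_le_of_lt h (Phi_mono (by linarith))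

lemma Phi_neg (x : ℝ) : stdGaussianCDF (-x) = 1 - stdGaussianCDF x := by
  have h1 : stdGaussianCDF (-x) = ∫ t in Ioi x, gd t := by
    rw [Phi_eq, ← integral_comp_neg_Ioi]
    simp [gd_neg]
  rw [h1, Phi_eq, ← gd_total, ← intervalIntegral.integral_Iic_add_Ioi (b := x) gd_int.integrableOn gd_int.integrableOn]
  ring

lemma Phi_lt_one (x : ℝ) : stdGaussianCDF x < 1 := by
  have := Phi_pos (-x); rw [Phi_neg] at this; linarith

lemma gd_le_one (t : ℝ) : gd t ≤ 1 := by
  unfold gd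
  rw [div_le_one (by positivity)]
  have h1 : Real.exp (-(t^2)/2) ≤ 1 := by
    rw [Real.exp_le_one_iff]; nlinarith [sq_nonneg t]
  have h2 : 1 ≤ Real.sqrt (2 * Real.pi) := by
    rw [Real.one_le_sqrt]; nlinarith [Real.pi_gt_three]
  linarith

lemma Phi_lip {a b : ℝ} (h : a ≤ b) : stdGaussianCDF b - stdGaussianCDF a ≤ b - a := by
  rw [Phi_sub]
  calc ∫ t in a..b, gd t ≤ ∫ t in a..b, (1:ℝ) := by
        apply intervalIntegral.integral_mono_on h (gd_cont.intervalIntegrable _ _) (by simp)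
        intro t _; exact gd_le_one t
    _ = b - a := by simp

lemma gd_atBot : Tendsto gd atBot (𝓝 0) := by
  have h1 : Tendsto (fun t : ℝ => -(t^2)/2) atBot atBot := by
    apply Tendsto.atBot_div_const (by norm_num)
    apply tendsto_neg_atTop_atBot.comp
    exact (tendsto_pow_atTop two_ne_zero).comp tendsto_abs_atBot_atTop |>.congr (fun t => by simp)
  have := (Real.tendsto_exp_atBot.comp h1).div_const (Real.sqrt (2 * Real.pi))
  rw [zero_div] at this
  exact this

/-- first Mills bound -/
lemma mills_one (w : ℝ) : 0 ≤ gd w + w * stdGaussianCDF w := by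
  rcases le_or_gt 0 w with h | h
  · have := gd_pos w; have := Phi_pos w; positivity
  · let E : ℝ → ℝ := fun w => - gd w * w⁻¹ - stdGaussianCDF w
    have hd : ∀ t ∈ Iio (0:ℝ), HasDerivAt E (gd t / t^2) t := by
      intro t ht
      have ht : t ≠ 0 := ne_of_lt ht
      have := (((gd_deriv t).neg).mul (hasDerivAt_inv ht)).sub (Phi_deriv t)
      refine this.congr_deriv ?_
      simp
      field_simp
      ring
    have hm : MonotoneOn E (Iio 0) := by
      apply monotoneOn_of_deriv_nonneg (convex_Iio 0)
      · intro t ht; exact (hd t ht).continuousAt.continuousWithinAt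
      · intro t ht; rw [interior_Iio] at ht
        exact (hd t ht).differentiableAt.differentiableWithinAt
      · intro t ht; rw [interior_Iio] at ht
        rw [(hd t ht).deriv]
        have := gd_pos t
        positivity
    have hl : Tendsto E atBot (𝓝 0) := by
      have := ((gd_atBot.neg).mul tendsto_inv_atBot_zero).sub Phi_atBot
      simpa [E] using this
    have h0 : 0 ≤ E w := by
      apply le_of_tendsto hl
      filter_upwards [eventually_le_atBot w] with t ht
      exact hm (lt_of_le_of_lt ht h) h ht
    have : gd w + w * stdGaussianCDF w = -w * E w := by
      have hw : w ≠ 0 := h.ne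
      simp only [E]; field_simp; ring
    rw [this]
    exact mul_nonneg (by linarith) h0

/-- second Mills bound -/
lemma mills_two (w : ℝ) : 0 ≤ (1 + w^2) * stdGaussianCDF w + w * gd w := by
  let E : ℝ → ℝ := fun w => stdGaussianCDF w + gd w * (w * (1 + w^2)⁻¹)
  have hd : ∀ t, HasDerivAt E (2 * gd t / (1+t^2)^2) t := by
    intro t
    have ht : 1 + t^2 ≠ 0 := by positivity
    have h1 : HasDerivAt (fun w : ℝ => 1 + w^2) (2 * t) t := by
      have := (hasDerivAt_pow 2 t).const_add 1
      refine this.congr_deriv ?_; simp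
    have := (Phi_deriv t).add ((gd_deriv t).mul ((hasDerivAt_id t).mul (h1.inv ht)))
    refine this.congr_deriv ?_
    simp
    field_simp
    ring
  have hm : Monotone E := by
    apply monotone_of_hasDerivAt_nonneg hd
    intro t
    have := gd_pos t
    positivity
  have hl : Tendsto E atBot (𝓝 0) := by
    have h2 : Tendsto (fun w => gd w * (w * (1 + w^2)⁻¹)) atBot (𝓝 0) := by
      apply squeeze_zero_norm _ gd_atBot
      intro t
      rw [norm_mul, Real.norm_of_nonneg (gd_pos t).le]
      apply mul_le_of_le_one_right (gd_pos t).le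
      rw [← div_eq_mul_inv, Real.norm_eq_abs, abs_div, abs_of_pos (by positivity : 0 < 1 + t^2),
        div_le_one (by positivity), ← sq_abs t]
      nlinarith [sq_nonneg (|t| - 1), sq_nonneg |t|]
    simpa [E] using Phi_atBot.add h2
  have h0 : 0 ≤ E w := by
    apply le_of_tendsto hl
    filter_upwards [eventually_le_atBot w] with t ht
    exact hm ht
  have : (1 + w^2) * stdGaussianCDF w + w * gd w = (1 + w^2) * E w := by
    simp only [E]; field_simp
  rw [this]
  positivity

/-- Mills ratio -/
noncomputable def mr (w : ℝ) : ℝ := stdGaussianCDF w / gd w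

lemma mr_pos (w : ℝ) : 0 < mr w := div_pos (Phi_pos w) (gd_pos w)

lemma mr_deriv (w : ℝ) : HasDerivAt mr (1 + w * mr w) w := by
  have := (Phi_deriv w).div (gd_deriv w) (gd_pos w).ne'
  have hg := (gd_pos w).ne'
  refine this.congr_deriv ?_
  simp only [mr]; field_simp; ring

lemma mr_mills (w : ℝ) : 0 ≤ 1 + w * mr w := by
  have h := mills_one w
  have hg := gd_pos w
  have : 1 + w * mr w = (gd w + w * stdGaussianCDF w) / gd w := by simp only [mr]; field_simp
  rw [this]; positivity

lemma mr_mono : Monotone mr := monotone_of_hasDerivAt_nonneg mr_deriv mr_mills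

lemma wmr_mono : Monotone (fun w => w * mr w) := by
  apply monotone_of_hasDerivAt_nonneg (fun w => (hasDerivAt_id w).mul (mr_deriv w))
  intro w
  have h := mills_two w
  have hg := gd_pos w
  have : 1 * mr w + id w * (1 + w * mr w) = ((1 + w^2) * stdGaussianCDF w + w * gd w) / gd w := by
    simp only [mr, id]; field_simp; ring
  change 0 ≤ 1 * mr w + id w * (1 + w * mr w)
  rw [this]; positivity

lemma mr_swap (w : ℝ) : stdGaussianCDF (-w) * mr w = stdGaussianCDF w * mr (-w) := by
  simp only [mr, gd_neg]; ring

/-- Stein solution -/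
noncomputable def sf (z w : ℝ) : ℝ := if w ≤ z then stdGaussianCDF (-z) * mr w else stdGaussianCDF z * mr (-w)

lemma sf_le {z w : ℝ} (h : w ≤ z) : sf z w = stdGaussianCDF (-z) * mr w := by simp [sf, h]

lemma sf_ge {z w : ℝ} (h : z ≤ w) : sf z w = stdGaussianCDF z * mr (-w) := by
  rcases h.eq_or_lt with rfl | h
  · rw [sf_le le_rfl, mr_swap]
  · simp [sf, h]

lemma sf_nonneg (z w : ℝ) : 0 ≤ sf z w := by
  rcases le_total w z with h | h
  · rw [sf_le h]; exact mul_nonneg (Phi_pos _).le (mr_pos _).le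
  · rw [sf_ge h]; exact mul_nonneg (Phi_pos _).le (mr_pos _).le

lemma sf_bound (z w : ℝ) : sf z w ≤ mr 0 := by
  have key : ∀ z w : ℝ, w ≤ z → stdGaussianCDF (-z) * mr w ≤ mr 0 := by
    intro z w h
    rcases le_total w 0 with h0 | h0
    · calc stdGaussianCDF (-z) * mr w ≤ 1 * mr 0 :=
        mul_le_mul (Phi_lt_one _).le (mr_mono h0) (mr_pos _).le zero_le_one
        _ = _ := one_mul _
    · calc stdGaussianCDF (-z) * mr w ≤ stdGaussianCDF (-w) * mr w :=
            mul_le_mul_of_nonneg_right (Phi_mono.monotone (by linarith)) (mr_pos _).le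
        _ = stdGaussianCDF w * mr (-w) := mr_swap w
        _ ≤ 1 * mr 0 := mul_le_mul (Phi_lt_one _).le (mr_mono (by linarith)) (mr_pos _).le zero_le_one
        _ = _ := one_mul _
  rcases le_total w z with h | h
  · rw [sf_le h]; exact key z w h
  · rw [sf_ge h]; simpa using key (-z) (-w) (by linarith)

lemma wsf_le_one (z w : ℝ) : w * sf z w ≤ 1 := by
  rcases le_total w 0 with h0 | h0
  · have := mul_nonneg (neg_nonneg.2 h0) (sf_nonneg z w); linarith
  have h1 : sf z w ≤ stdGaussianCDF w * mr (-w) := by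
    rcases le_total w z with h | h
    · rw [sf_le h, ← mr_swap]
      exact mul_le_mul_of_nonneg_right (Phi_mono.monotone (by linarith)) (mr_pos _).le
    · rw [sf_ge h]
      exact mul_le_mul_of_nonneg_right (Phi_mono.monotone (by linarith)) (mr_pos _).le
  have h2 : stdGaussianCDF w * mr (-w) ≤ mr (-w) := mul_le_of_le_one_left (mr_pos _).le (Phi_lt_one _).le
  have h3 := mr_mills (-w)
  have h4 := mul_le_mul_of_nonneg_left (h1.trans h2) h0
  linarith

lemma sf_neg (z w : ℝ) : sf (-z) (-w) = sf z w := by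
  rcases le_total w z with h | h
  · rw [sf_le h, sf_ge (by linarith)]; simp
  · rw [sf_ge h, sf_le (by linarith)]; simp

lemma wsf_ge_neg_one (z w : ℝ) : -1 ≤ w * sf z w := by
  have := wsf_le_one (-z) (-w)
  rw [sf_neg] at this; linarith

lemma wsf_mono (z : ℝ) : Monotone (fun w => w * sf z w) := by
  have h1 : ∀ a b, a ≤ b → b ≤ z → a * sf z a ≤ b * sf z b := by
    intro a b hab hb
    rw [sf_le hb, sf_le (hab.trans hb)]
    have := mul_le_mul_of_nonneg_left (wmr_mono hab) (Phi_pos (-z)).le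
    simp only at this; linarith
  have h2 : ∀ a b, a ≤ b → z ≤ a → a * sf z a ≤ b * sf z b := by
    intro a b hab ha
    rw [sf_ge ha, sf_ge (ha.trans hab)]
    have := mul_le_mul_of_nonneg_left (wmr_mono (neg_le_neg hab)) (Phi_pos z).le
    simp only at this; linarith
  intro a b hab
  rcases le_total b z with hb | hb
  · exact h1 a b hab hb
  rcases le_total z a with ha | ha
  · exact h2 a b hab ha
  · exact (h1 a z ha le_rfl).trans (h2 z b hb le_rfl)

lemma sf_deriv_lt {z w : ℝ} (h : w < z) :
    HasDerivAt (sf z) (w * sf z w + 1 - stdGaussianCDF z) w := by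
  have h1 := (mr_deriv w).const_mul (stdGaussianCDF (-z))
  rw [sf_le h.le]
  have h2 : HasDerivAt (fun w => stdGaussianCDF (-z) * mr w) (w * (stdGaussianCDF (-z) * mr w) + 1 - stdGaussianCDF z) w := by
    refine h1.congr_deriv ?_
    rw [Phi_neg]; ring
  apply h2.congr_of_eventuallyEq
  filter_upwards [Iio_mem_nhds h] with t ht
  exact sf_le (le_of_lt ht)

lemma sf_deriv_ge {z w : ℝ} (h : z ≤ w) :
    HasDerivWithinAt (sf z) (w * sf z w - stdGaussianCDF z) (Ici w) w := by
  have h1 := ((mr_deriv (-w)).comp w (hasDerivAt_neg w)).const_mul (stdGaussianCDF z)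
  rw [sf_ge h]
  have h2 : HasDerivAt (fun w => stdGaussianCDF z * mr (-w)) (w * (stdGaussianCDF z * mr (-w)) - stdGaussianCDF z) w := by
    refine h1.congr_deriv ?_
    ring
  apply h2.hasDerivWithinAt.congr
  · intro t ht; exact sf_ge (h.trans ht)
  · exact sf_ge h

lemma sf_deriv (z w : ℝ) :
    HasDerivWithinAt (sf z) (w * sf z w + (if w < z then 1 else 0) - stdGaussianCDF z) (Ici w) w := by
  split_ifs with h
  · exact (sf_deriv_lt h).hasDerivWithinAt
  · simpa using sf_deriv_ge (not_lt.1 h)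

lemma mr_cont : Continuous mr :=
  continuous_iff_continuousAt.2 fun w => (mr_deriv w).continuousAt

lemma sf_cont (z : ℝ) : Continuous (sf z) := by
  unfold sf
  apply Continuous.if_le
  · exact continuous_const.mul mr_cont
  · exact continuous_const.mul (mr_cont.comp continuous_neg)
  · exact continuous_id
  · exact continuous_const
  · intro w hw
    subst hw; exact mr_swap _

lemma sf_upper (z : ℝ) {a b : ℝ} (h : a ≤ b) :
    sf z b - sf z a ≤ (b - a) * ((if a ≤ z then 1 else 0) - stdGaussianCDF z + b * sf z b) := by
  set D := (if a ≤ z then (1:ℝ) else 0) - stdGaussianCDF z + b * sf z b with hD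
  have := image_le_of_deriv_right_le_deriv_boundary (f := sf z) (a := a) (b := b)
    (sf_cont z).continuousOn (fun x _ => sf_deriv z x) (B := fun x => sf z a + D * (x - a))
    (B' := fun _ => D) (by simp) (by fun_prop)
    (fun x _ => by
      have := (((hasDerivAt_id x).sub_const a).const_mul D).const_add (sf z a)
      simpa using this.hasDerivWithinAt) (by
      intro x hx
      have h1 := wsf_mono z hx.2.le
      simp only at h1
      have h2 : (if x < z then (1:ℝ) else 0) ≤ if a ≤ z then 1 else 0 := by
        split_ifs with h3 h4 <;> first | linarith | (have := hx.1; exfalso; linarith)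
      rw [hD]; linarith) (right_mem_Icc.2 h)
  linarith

lemma sf_lower (z : ℝ) {a b : ℝ} (h : a ≤ b) :
    (b - a) * ((if b ≤ z then 1 else 0) - stdGaussianCDF z + a * sf z a) ≤ sf z b - sf z a := by
  set D := (if b ≤ z then (1:ℝ) else 0) - stdGaussianCDF z + a * sf z a with hD
  have := image_le_of_deriv_right_le_deriv_boundary (B := sf z) (a := a) (b := b)
    (f := fun x => sf z a + D * (x - a))
    (f' := fun _ => D) (by fun_prop)
    (fun x _ => by
      have := (((hasDerivAt_id x).sub_const a).const_mul D).const_add (sf z a)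
      simpa using this.hasDerivWithinAt) (by simp)
    (sf_cont z).continuousOn (fun x _ => sf_deriv z x) (by
      intro x hx
      have h1 := wsf_mono z hx.1
      simp only at h1
      have h2 : (if b ≤ z then (1:ℝ) else 0) ≤ if x < z then 1 else 0 := by
        split_ifs with h3 h4 <;> first | linarith | (have := hx.2; exfalso; linarith)
      rw [hD]; linarith) (right_mem_Icc.2 h)
  linarith

lemma sf_lip (z : ℝ) {a b : ℝ} (h : a ≤ b) : |sf z b - sf z a| ≤ 2 * (b - a) := by
  have h1 := sf_upper z h
  have h2 := sf_lower z h
  have h3 : (b - a) * ((if a ≤ z then 1 else 0) - stdGaussianCDF z + b * sf z b) ≤ (b - a) * 2 := by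
    apply mul_le_mul_of_nonneg_left _ (by linarith)
    have := wsf_le_one z b
    have := Phi_pos z
    split_ifs <;> linarith
  have h4 : (b - a) * (-2) ≤ (b - a) * ((if b ≤ z then 1 else 0) - stdGaussianCDF z + a * sf z a) := by
    apply mul_le_mul_of_nonneg_left _ (by linarith)
    have := wsf_ge_neg_one z a
    have := Phi_lt_one z
    split_ifs <;> linarith
  rw [abs_le]; constructor <;> linarith

end LemAux

namespace LemAux
open Polynomial

/-- the functional `∑ a_k X^k ↦ ∑ a_k h(k)` -/
noncomputable def LL (h : ℕ → ℝ) : ℝ[X] →ₗ[ℝ] ℝ := lsum (fun k => h k • LinearMap.id)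

lemma LL_mono (h : ℕ → ℝ) (k : ℕ) (c : ℝ) : LL h (monomial k c) = h k * c := by
  simp [LL, lsum_apply, sum_monomial_index]

lemma LL_X_pow (h : ℕ → ℝ) (k : ℕ) : LL h (X ^ k) = h k := by
  rw [X_pow_eq_monomial, LL_mono, mul_one]

lemma LL_sum (h : ℕ → ℝ) (P : ℝ[X]) : LL h P = ∑ k ∈ P.support, h k * P.coeff k := by
  conv_lhs => rw [P.as_sum_support]
  rw [map_sum]
  simp [LL_mono]

lemma LL_X_mul (h : ℕ → ℝ) (P : ℝ[X]) : LL h (X * P) = LL (fun k => h (k+1)) P := by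
  induction P using Polynomial.induction_on' with
  | add p q hp hq => rw [mul_add, map_add, map_add, hp, hq]
  | monomial k c => rw [X_mul_monomial, LL_mono, LL_mono]

lemma LL_deriv (h : ℕ → ℝ) (P : ℝ[X]) : LL (fun k => k * h k) P = LL h (X * derivative P) := by
  induction P using Polynomial.induction_on' with
  | add p q hp hq => rw [derivative_add, mul_add, map_add, map_add, hp, hq]
  | monomial k c =>
    rw [derivative_monomial, X_mul_monomial, LL_mono, LL_mono]
    rcases k with _ | k
    · simp
    · simp; ring

lemma LL_add (h g : ℕ → ℝ) (P : ℝ[X]) : LL (fun k => h k + g k) P = LL h P + LL g P := by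
  simp only [LL_sum, ← Finset.sum_add_distrib, add_mul]

lemma LL_sub (h g : ℕ → ℝ) (P : ℝ[X]) : LL (fun k => h k - g k) P = LL h P - LL g P := by
  simp only [LL_sum, ← Finset.sum_sub_distrib, sub_mul]

lemma LL_smul (a : ℝ) (h : ℕ → ℝ) (P : ℝ[X]) : LL (fun k => a * h k) P = a * LL h P := by
  simp only [LL_sum, Finset.mul_sum, mul_assoc]

lemma LL_one (P : ℝ[X]) : LL (fun _ => 1) P = P.eval 1 := by
  rw [LL_sum, eval_eq_sum, Polynomial.sum]; simp

lemma LL_const (a : ℝ) (P : ℝ[X]) : LL (fun _ => a) P = a * P.eval 1 := by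
  rw [← LL_one, ← LL_smul]; simp

lemma LL_le {h g : ℕ → ℝ} {P : ℝ[X]} (hP : ∀ k, 0 ≤ P.coeff k) (hg : ∀ k, h k ≤ g k) :
    LL h P ≤ LL g P := by
  simp only [LL_sum]
  exact Finset.sum_le_sum fun k _ => mul_le_mul_of_nonneg_right (hg k) (hP k)

/-- nonnegative coefficients -/
def NN (P : ℝ[X]) : Prop := ∀ k, 0 ≤ P.coeff k

lemma NN.mul {P Q : ℝ[X]} (hP : NN P) (hQ : NN Q) : NN (P * Q) := by
  intro k
  rw [coeff_mul]
  exact Finset.sum_nonneg fun x _ => mul_nonneg (hP _) (hQ _)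

lemma NN_prod {ι : Type*} (s : Finset ι) (f : ι → ℝ[X]) (h : ∀ i ∈ s, NN (f i)) :
    NN (∏ i ∈ s, f i) := by
  classical
  induction s using Finset.induction_on with
  | empty => intro k; simp [coeff_one]; split_ifs <;> norm_num
  | insert a s ha ih =>
    rw [Finset.prod_insert ha]
    exact (h a (by simp)).mul (ih fun i hi => h i (by simp [hi]))

/-- Bernoulli factor -/
noncomputable def bf (p : ℝ) : ℝ[X] := C (1 - p) + C p * X

lemma bf_NN {p : ℝ} (h0 : 0 ≤ p) (h1 : p ≤ 1) : NN (bf p) := by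
  intro k
  simp only [bf, coeff_add, coeff_C, coeff_C_mul, coeff_X]
  split_ifs <;> simp <;> linarith

lemma bf_eval (p : ℝ) : (bf p).eval 1 = 1 := by simp [bf]

lemma LL_bf (h : ℕ → ℝ) (p : ℝ) (P : ℝ[X]) :
    LL h (bf p * P) = (1 - p) * LL h P + p * LL (fun k => h (k+1)) P := by
  rw [bf, add_mul, map_add, mul_assoc, ← smul_eq_C_mul, ← smul_eq_C_mul, map_smul, map_smul,
    LL_X_mul]
  rfl

section main
variable {n : ℕ} (p : Fin n → ℝ)

/-- product of Bernoulli factors -/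
noncomputable def BP : ℝ[X] := ∏ i, bf (p i)
/-- product of all but one Bernoulli factors -/
noncomputable def BPi (i : Fin n) : ℝ[X] := ∏ j ∈ Finset.univ.erase i, bf (p j)

lemma BP_eq (i : Fin n) : BP p = bf (p i) * BPi p i :=
  (Finset.mul_prod_erase _ _ (Finset.mem_univ i)).symm

lemma BP_eval : (BP p).eval 1 = 1 := by
  simp [BP, eval_prod, bf_eval]

lemma BPi_eval (i : Fin n) : (BPi p i).eval 1 = 1 := by
  simp [BPi, eval_prod, bf_eval]

lemma BP_deriv : derivative (BP p) = ∑ i, C (p i) * BPi p i := by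
  rw [BP, derivative_prod_finset]
  refine Finset.sum_congr rfl fun i _ => ?_
  have hb : derivative (bf (p i)) = C (p i) := by simp [bf]
  rw [hb, mul_comm]; rfl

lemma stein_id (f : ℕ → ℝ) :
    LL (fun k => ((k:ℝ) - ∑ i, p i) * f k) (BP p) =
      ∑ i, p i * (1 - p i) * LL (fun k => f (k+1) - f k) (BPi p i) := by
  have h1 : LL (fun k => ((k:ℝ) - ∑ i, p i) * f k) (BP p) =
      LL (fun k => (k:ℝ) * f k) (BP p) - (∑ i, p i) * LL f (BP p) := by
    rw [← LL_smul, ← LL_sub]; congr 2; funext k; ring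
  rw [h1, LL_deriv, BP_deriv, Finset.mul_sum, map_sum, Finset.sum_mul, ← Finset.sum_sub_distrib]
  refine Finset.sum_congr rfl fun i _ => ?_
  rw [BP_eq p i, LL_bf, LL_sub, LL_X_mul, ← smul_eq_C_mul, map_smul, smul_eq_mul]
  ring

lemma bern_mean : LL (fun k => (k:ℝ)) (BP p) = ∑ i, p i := by
  have := stein_id p (fun _ => 1)
  simp only [mul_one, sub_self, LL_sub, LL_const, BP_eval] at this
  simp at this
  linarith

lemma bern_var : LL (fun k => ((k:ℝ) - ∑ i, p i)^2) (BP p) = ∑ i, p i * (1 - p i) := by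
  have := stein_id p (fun k => (k:ℝ) - ∑ i, p i)
  simp only [← sq] at this
  rw [this]
  refine Finset.sum_congr rfl fun i _ => ?_
  have h : (fun k : ℕ => ((k+1:ℕ):ℝ) - ∑ i, p i - ((k:ℝ) - ∑ i, p i)) = fun _ => (1:ℝ) := by
    funext k; push_cast; ring
  rw [h, LL_one, BPi_eval, mul_one]


lemma BP_NN (h0 : ∀ i, 0 ≤ p i) (h1 : ∀ i, p i ≤ 1) : NN (BP p) := NN_prod _ _ fun i _ => bf_NN (h0 i) (h1 i)
lemma BPi_NN (h0 : ∀ i, 0 ≤ p i) (h1 : ∀ i, p i ≤ 1) (i : Fin n) : NN (BPi p i) := NN_prod _ _ fun i _ => bf_NN (h0 i) (h1 i)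

lemma BPi_le (h0 : ∀ i, 0 ≤ p i) (h1 : ∀ i, p i ≤ 1) (i : Fin n) {g h : ℕ → ℝ} (a : ∀ k, g k ≤ h k) (b : ∀ k, g k ≤ h (k+1)) :
    LL g (BPi p i) ≤ LL h (BP p) := by
  rw [BP_eq p i, LL_bf]
  have e1 := mul_le_mul_of_nonneg_left (LL_le (BPi_NN p h0 h1 i) a) (sub_nonneg.2 (h1 i))
  have e2 := mul_le_mul_of_nonneg_left (LL_le (BPi_NN p h0 h1 i) b) (h0 i)
  linarith

lemma BPi_ge (h0 : ∀ i, 0 ≤ p i) (h1 : ∀ i, p i ≤ 1) (i : Fin n) {g h : ℕ → ℝ} (a : ∀ k, h k ≤ g k) (b : ∀ k, h (k+1) ≤ g k) :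
    LL h (BP p) ≤ LL g (BPi p i) := by
  rw [BP_eq p i, LL_bf]
  have e1 := mul_le_mul_of_nonneg_left (LL_le (BPi_NN p h0 h1 i) a) (sub_nonneg.2 (h1 i))
  have e2 := mul_le_mul_of_nonneg_left (LL_le (BPi_NN p h0 h1 i) b) (h0 i)
  linarith

lemma bern_absmean (h0 : ∀ i, 0 ≤ p i) (h1 : ∀ i, p i ≤ 1) (s : ℝ) (hs : 0 < s) (hv : s^2 = ∑ i, p i * (1 - p i)) :
    LL (fun k => |((k:ℝ) - ∑ i, p i) / s|) (BP p) ≤ 1 := by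
  have : LL (fun k => |((k:ℝ) - ∑ i, p i) / s|) (BP p) ≤
      LL (fun k => 1/2 + (1/(2*s^2)) * ((k:ℝ) - ∑ i, p i)^2) (BP p) := by
    apply LL_le (BP_NN p h0 h1)
    intro k
    have : (1/(2*s^2)) * ((k:ℝ) - ∑ i, p i)^2 = (1/2) * |((k:ℝ) - ∑ i, p i) / s|^2 := by
      rw [sq_abs]; field_simp
    rw [this]
    nlinarith [sq_nonneg (|((k:ℝ) - ∑ i, p i) / s| - 1)]
  refine this.trans ?_
  rw [LL_add, LL_smul, bern_var, LL_const, BP_eval, ← hv]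
  field_simp; norm_num

lemma stein_upper (h0 : ∀ i, 0 ≤ p i) (h1 : ∀ i, p i ≤ 1) (s : ℝ) (hs : 0 < s) (hv : s^2 = ∑ i, p i * (1 - p i)) (z : ℝ) :
    stdGaussianCDF z - (1/s) * (2 + mr 0) ≤
      LL (fun k => if ((k:ℝ) - ∑ i, p i) / s ≤ z + 1/s then 1 else 0) (BP p) := by
  set μ := ∑ i, p i with hμ
  set W : ℕ → ℝ := fun k => ((k:ℝ) - μ) / s with hW
  have hs' : 0 < 1/s := by positivity
  have hWs : ∀ k, W (k+1) = W k + 1/s := by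
    intro k; simp only [hW]; push_cast; field_simp; ring
  have hid := stein_id p (fun k => sf z (W k))
  set G : ℕ → ℝ := fun k => (if W k ≤ z + 1/s then 1 else 0) - stdGaussianCDF z +
    (W k + 1/s) * sf z (W k + 1/s) with hG
  have hup : ∀ i, LL (fun k => sf z (W (k+1)) - sf z (W k)) (BPi p i) ≤ (1/s) * LL G (BP p) := by
    intro i
    rw [← LL_smul]
    have key : ∀ k, sf z (W (k+1)) - sf z (W k) ≤ (1/s) * ((if W k ≤ z then 1 else 0)
      - stdGaussianCDF z + (W k + 1/s) * sf z (W k + 1/s)) := by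
      intro k
      have := sf_upper z (a := W k) (b := W (k+1)) (by rw [hWs]; linarith)
      rw [hWs] at this ⊢
      simpa using this
    apply BPi_le p h0 h1
    · intro k
      refine (key k).trans (mul_le_mul_of_nonneg_left ?_ hs'.le)
      have : (if W k ≤ z then (1:ℝ) else 0) ≤ if W k ≤ z + 1/s then 1 else 0 := by
        split_ifs <;> linarith
      simp only [hG]; linarith
    · intro k
      refine (key k).trans (mul_le_mul_of_nonneg_left ?_ hs'.le)
      have e1 : (if W k ≤ z then (1:ℝ) else 0) ≤ if W (k+1) ≤ z + 1/s then 1 else 0 := by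
        rw [hWs]; split_ifs <;> linarith
      have e2 := wsf_mono z (show W k + 1/s ≤ W (k+1) + 1/s by rw [hWs]; linarith)
      simp only at e2
      simp only [hG]; linarith
  have hsum : LL (fun k => ((k:ℝ) - μ) * sf z (W k)) (BP p) ≤ s * LL G (BP p) := by
    rw [hid]
    calc _ ≤ ∑ i, p i * (1 - p i) * ((1/s) * LL G (BP p)) :=
          Finset.sum_le_sum fun i _ => mul_le_mul_of_nonneg_left (hup i)
            (mul_nonneg (h0 i) (sub_nonneg.2 (h1 i)))
      _ = _ := by
          rw [← Finset.sum_mul, ← hv]; field_simp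
  have hsum2 : LL (fun k => W k * sf z (W k)) (BP p) ≤ LL G (BP p) := by
    have : LL (fun k => ((k:ℝ) - μ) * sf z (W k)) (BP p) =
        s * LL (fun k => W k * sf z (W k)) (BP p) := by
      rw [← LL_smul]; congr 2; funext k; simp only [hW]; field_simp
    rw [this] at hsum
    exact le_of_mul_le_mul_left hsum hs
  have hdiff : LL (fun k => (W k + 1/s) * sf z (W k + 1/s) - W k * sf z (W k)) (BP p) ≤
      (1/s) * (2 + mr 0) := by
    have : LL (fun k => (W k + 1/s) * sf z (W k + 1/s) - W k * sf z (W k)) (BP p) ≤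
        LL (fun k => (1/s) * (2 * |W k| + mr 0)) (BP p) := by
      apply LL_le (BP_NN p h0 h1)
      intro k
      have e1 := sf_lip z (show W k ≤ W k + 1/s by linarith)
      have e2 := sf_bound z (W k + 1/s)
      have e3 : W k * (sf z (W k + 1/s) - sf z (W k)) ≤ |W k| * (2 * (1/s)) := by
        refine (le_abs_self _).trans ?_
        rw [abs_mul]
        apply mul_le_mul_of_nonneg_left _ (abs_nonneg _)
        simpa using e1
      have e4 := mul_le_mul_of_nonneg_left e2 hs'.le
      linarith
    refine this.trans ?_
    rw [LL_smul, LL_add, LL_smul, LL_const, BP_eval]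
    apply mul_le_mul_of_nonneg_left _ hs'.le
    have := bern_absmean p h0 h1 s hs hv
    simp only [hW]
    linarith
  have hGe : LL G (BP p) = LL (fun k => if W k ≤ z + 1/s then 1 else 0) (BP p) -
      stdGaussianCDF z + LL (fun k => (W k + 1/s) * sf z (W k + 1/s)) (BP p) := by
    simp only [hG]
    rw [LL_add, LL_sub, LL_const, BP_eval, mul_one]
  rw [LL_sub] at hdiff
  linarith

lemma stein_lower (h0 : ∀ i, 0 ≤ p i) (h1 : ∀ i, p i ≤ 1) (s : ℝ) (hs : 0 < s) (hv : s^2 = ∑ i, p i * (1 - p i)) (z : ℝ) :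
      LL (fun k => if ((k:ℝ) - ∑ i, p i) / s ≤ z - 1/s then 1 else 0) (BP p) ≤
      stdGaussianCDF z + (1/s) * (2 + mr 0) := by
  set μ := ∑ i, p i with hμ
  set W : ℕ → ℝ := fun k => ((k:ℝ) - μ) / s with hW
  have hs' : 0 < 1/s := by positivity
  have hWs : ∀ k, W (k+1) = W k + 1/s := by
    intro k; simp only [hW]; push_cast; field_simp; ring
  have hid := stein_id p (fun k => sf z (W k))
  set G : ℕ → ℝ := fun k => (if W k ≤ z - 1/s then 1 else 0) - stdGaussianCDF z +
    (W k - 1/s) * sf z (W k - 1/s) with hG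
  have hup : ∀ i, (1/s) * LL G (BP p) ≤ LL (fun k => sf z (W (k+1)) - sf z (W k)) (BPi p i) := by
    intro i
    rw [← LL_smul]
    have key : ∀ k, (1/s) * ((if W k + 1/s ≤ z then 1 else 0)
      - stdGaussianCDF z + W k * sf z (W k)) ≤ sf z (W (k+1)) - sf z (W k) := by
      intro k
      have := sf_lower z (a := W k) (b := W (k+1)) (by rw [hWs]; linarith)
      rw [hWs] at this ⊢
      simpa using this
    apply BPi_ge p h0 h1
    · intro k
      refine (mul_le_mul_of_nonneg_left ?_ hs'.le).trans (key k)
      have e1 : (if W k ≤ z - 1/s then (1:ℝ) else 0) ≤ if W k + 1/s ≤ z then 1 else 0 := by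
        split_ifs <;> linarith
      have e2 := wsf_mono z (show W k - 1/s ≤ W k by linarith)
      simp only at e2
      simp only [hG]; linarith
    · intro k
      refine (mul_le_mul_of_nonneg_left ?_ hs'.le).trans (key k)
      have e1 : (if W (k+1) ≤ z - 1/s then (1:ℝ) else 0) ≤ if W k + 1/s ≤ z then 1 else 0 := by
        rw [hWs]; split_ifs <;> linarith
      have e2 : W (k+1) - 1/s = W k := by rw [hWs]; ring
      simp only [hG, e2]; linarith
  have hsum : s * LL G (BP p) ≤ LL (fun k => ((k:ℝ) - μ) * sf z (W k)) (BP p) := by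
    rw [hid]
    calc _ = ∑ i, p i * (1 - p i) * ((1/s) * LL G (BP p)) := by
          rw [← Finset.sum_mul, ← hv]; field_simp
      _ ≤ _ := Finset.sum_le_sum fun i _ => mul_le_mul_of_nonneg_left (hup i)
            (mul_nonneg (h0 i) (sub_nonneg.2 (h1 i)))
  have hsum2 : LL G (BP p) ≤ LL (fun k => W k * sf z (W k)) (BP p) := by
    have : LL (fun k => ((k:ℝ) - μ) * sf z (W k)) (BP p) =
        s * LL (fun k => W k * sf z (W k)) (BP p) := by
      rw [← LL_smul]; congr 2; funext k; simp only [hW]; field_simp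
    rw [this] at hsum
    exact le_of_mul_le_mul_left hsum hs
  have hdiff : LL (fun k => W k * sf z (W k) - (W k - 1/s) * sf z (W k - 1/s)) (BP p) ≤
      (1/s) * (2 + mr 0) := by
    have : LL (fun k => W k * sf z (W k) - (W k - 1/s) * sf z (W k - 1/s)) (BP p) ≤
        LL (fun k => (1/s) * (2 * |W k| + mr 0)) (BP p) := by
      apply LL_le (BP_NN p h0 h1)
      intro k
      have e1 := sf_lip z (show W k - 1/s ≤ W k by linarith)
      have e2 := sf_bound z (W k - 1/s)
      have e3 : W k * (sf z (W k) - sf z (W k - 1/s)) ≤ |W k| * (2 * (1/s)) := by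
        refine (le_abs_self _).trans ?_
        rw [abs_mul]
        apply mul_le_mul_of_nonneg_left _ (abs_nonneg _)
        simpa using e1
      have e4 := mul_le_mul_of_nonneg_left e2 hs'.le
      linarith
    refine this.trans ?_
    rw [LL_smul, LL_add, LL_smul, LL_const, BP_eval]
    apply mul_le_mul_of_nonneg_left _ hs'.le
    have := bern_absmean p h0 h1 s hs hv
    simp only [hW]
    linarith
  have hGe : LL G (BP p) = LL (fun k => if W k ≤ z - 1/s then 1 else 0) (BP p) -
      stdGaussianCDF z + LL (fun k => (W k - 1/s) * sf z (W k - 1/s)) (BP p) := by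
    simp only [hG]
    rw [LL_add, LL_sub, LL_const, BP_eval, mul_one]
  rw [LL_sub] at hdiff
  linarith

lemma stein_bern (h0 : ∀ i, 0 ≤ p i) (h1 : ∀ i, p i ≤ 1) (s : ℝ) (hs : 0 < s) (hv : s^2 = ∑ i, p i * (1 - p i)) (z : ℝ) :
    |LL (fun k => if ((k:ℝ) - ∑ i, p i) / s ≤ z then 1 else 0) (BP p) - stdGaussianCDF z| ≤
      (1/s) * (3 + mr 0) := by
  have hs' : 0 < 1/s := by positivity
  have a := stein_upper p h0 h1 s hs hv (z - 1/s)
  have b := stein_lower p h0 h1 s hs hv (z + 1/s)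
  have c := Phi_lip (show z - 1/s ≤ z by linarith)
  have d := Phi_lip (show z ≤ z + 1/s by linarith)
  rw [sub_add_cancel] at a
  rw [add_sub_cancel_right] at b
  rw [abs_le]
  constructor <;> linarith

end main

end LemAux

namespace LemAux
open Filter Topology

/-- `cot (y/2)` -/
noncomputable def cf (y : ℂ) : ℂ := Complex.cos (y/2) / Complex.sin (y/2)

/-- `(1+cot^2)/2` -/
noncomputable def cs (y : ℂ) : ℂ := (1 + cf y ^ 2) / 2

/-- iterated derivatives of `cf` up to sign -/
noncomputable def cA : ℕ → ℂ → ℂ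
  | 0 => cf
  | (N+1) => fun y => ∑ T : LemniscateTree (N+1),
      cf y ^ (N - 2 * outdegTwoCount T) * cs y ^ (outdegTwoCount T + 1)

lemma cf_deriv {y : ℂ} (hy : Complex.sin (y/2) ≠ 0) : HasDerivAt cf (-cs y) y := by
  have h2 : HasDerivAt (fun y : ℂ => y/2) (1/2) y := (hasDerivAt_id y).div_const 2
  have := (h2.ccos).div (h2.csin) hy
  refine this.congr_deriv ?_
  simp only [cs, cf]
  field_simp
  ring

lemma cs_deriv {y : ℂ} (hy : Complex.sin (y/2) ≠ 0) : HasDerivAt cs (-(cf y * cs y)) y := by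
  have := (((cf_deriv hy).pow 2).const_add 1).div_const 2
  refine this.congr_deriv ?_
  simp
  ring

lemma cA_deriv {y : ℂ} (hy : Complex.sin (y/2) ≠ 0) (n : ℕ) :
    HasDerivAt (cA n) (-cA (n+1) y) y := by
  rcases n with _ | N
  · have : cA (0+1) y = cs y := by
      simp only [cA]
      rw [sum_one (fun k => cf y ^ (0 - 2 * k) * cs y ^ (k+1))]
      simp
    rw [this]; exact cf_deriv hy
  · have hh : HasDerivAt (fun y => ∑ T : LemniscateTree (N+1),
      cf y ^ (N - 2 * outdegTwoCount T) * cs y ^ (outdegTwoCount T + 1))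
      (∑ T : LemniscateTree (N+1), -((outdegTwoCount T + 1) •
        (cf y ^ (N + 1 - 2 * outdegTwoCount T) * cs y ^ (outdegTwoCount T + 1)) +
      (N - 2 * outdegTwoCount T) • (cf y ^ (N + 1 - 2 * (outdegTwoCount T + 1)) *
        cs y ^ (outdegTwoCount T + 1 + 1)))) y := by
      apply HasDerivAt.fun_sum
      intro T _
      have h := two_count_le T
      generalize outdegTwoCount T = k at *
      obtain ⟨m, rfl⟩ := Nat.exists_eq_add_of_le h
      have e1 : 2 * k + m + 1 - 2 * k = m + 1 := by omega
      have e2 : 2 * k + m - 2 * k = m := by omega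
      have e3 : 2 * k + m + 1 - 2 * (k + 1) = m - 1 := by omega
      rw [e1, e2, e3]
      have := ((cf_deriv hy).pow m).mul ((cs_deriv hy).pow (k+1))
      refine this.congr_deriv ?_
      simp only [nsmul_eq_mul, Nat.add_sub_cancel, Pi.pow_apply]
      push_cast
      ring
    rw [Finset.sum_neg_distrib,
      ← sum_rec N (fun k => cf y ^ (N + 1 - 2 * k) * cs y ^ (k + 1))] at hh
    exact hh

/-- the function `y cot(y/2)`, extended to `0` -/
noncomputable def ch (y : ℂ) : ℂ := Complex.cos (y/2) / dslope (fun y => Complex.sin (y/2)) 0 y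

lemma ch_eq {y : ℂ} (hy : Complex.sin (y/2) ≠ 0) : ch y = y * cA 0 y := by
  have h0 : y ≠ 0 := by rintro rfl; simp at hy
  rw [ch, dslope_of_ne _ h0, slope_def_field]
  simp only [cA, cf]
  simp
  field_simp

lemma open_U : IsOpen {y : ℂ | Complex.sin (y/2) ≠ 0} := by
  apply isOpen_ne_fun
  · fun_prop
  · fun_prop

lemma ch_iter (n : ℕ) : ∀ y : ℂ, Complex.sin (y/2) ≠ 0 →
    iteratedDeriv n ch y = (-1)^n * (y * cA n y - n * cA (n-1) y) := by
  induction n with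
  | zero => intro y hy; simp [ch_eq hy]
  | succ n ih =>
    intro y hy
    rw [iteratedDeriv_succ]
    have he : iteratedDeriv n ch =ᶠ[𝓝 y] fun y => (-1)^n * (y * cA n y - n * cA (n-1) y) := by
      filter_upwards [open_U.mem_nhds hy] with t ht
      exact ih t ht
    rw [he.deriv_eq]
    have h1 : HasDerivAt (fun y => (n:ℂ) * cA (n-1) y) (-(n * cA n y)) y := by
      rcases n with _ | n
      · simpa using hasDerivAt_const y (0:ℂ)
      · have := (cA_deriv hy n).const_mul ((n+1:ℕ):ℂ)
        refine this.congr_deriv ?_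
        ring
    have h2 := (((hasDerivAt_id y).mul (cA_deriv hy n)).sub h1).const_mul ((-1:ℂ)^n)
    have h3 : HasDerivAt (fun y => (-1)^n * (y * cA n y - n * cA (n-1) y))
      ((-1)^(n+1) * (y * cA (n+1) y - (n+1:ℕ) * cA n y)) y := by
      refine h2.congr_deriv ?_
      simp; ring
    rw [h3.deriv]
    simp

lemma ch_diff : DifferentiableOn ℂ ch (Metric.ball ((Real.pi/2 : ℝ) : ℂ) (9/2)) := by
  have hd : Differentiable ℂ (dslope (fun y : ℂ => Complex.sin (y/2)) 0) := by
    rw [← differentiableOn_univ, Complex.differentiableOn_dslope univ_mem]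
    fun_prop
  unfold ch
  apply DifferentiableOn.div
  · fun_prop
  · exact hd.differentiableOn
  · intro y hy
    by_cases h0 : y = 0
    · subst h0
      rw [dslope_same]
      have h2 : HasDerivAt (fun y : ℂ => y/2) (1/2) 0 := (hasDerivAt_id (0:ℂ)).div_const 2
      rw [h2.csin.deriv]
      simp
    · rw [dslope_of_ne _ h0, slope_def_field]
      simp only [zero_div, Complex.sin_zero, sub_zero]
      apply div_ne_zero _ h0
      intro hs
      rw [Complex.sin_eq_zero_iff] at hs
      obtain ⟨k, hk⟩ := hs
      have hy2 : y = ((2 * k * Real.pi : ℝ) : ℂ) := by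
        push_cast; linear_combination 2 * hk
      rw [Metric.mem_ball, dist_eq_norm, hy2, ← Complex.ofReal_sub, Complex.norm_real,
        Real.norm_eq_abs, abs_lt] at hy
      have hp := Real.pi_gt_d2
      have hk0 : k ≠ 0 := by
        rintro rfl; apply h0; simp [hy2]
      rcases lt_or_gt_of_ne hk0 with h | h
      · have : (k:ℝ) ≤ -1 := by exact_mod_cast (by omega : k ≤ -1)
        nlinarith [hy.1]
      · have : (1:ℝ) ≤ k := by exact_mod_cast (by omega : 1 ≤ k)
        nlinarith [hy.2]

lemma sin_pi4 : Complex.sin (((Real.pi/2 : ℝ) : ℂ)/2) ≠ 0 := by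
  have : ((Real.pi/2 : ℝ) : ℂ)/2 = ((Real.pi/4 : ℝ) : ℂ) := by push_cast; ring
  rw [this, ← Complex.ofReal_sin, Real.sin_pi_div_four]
  norm_num

lemma cf_pi : cf ((Real.pi/2 : ℝ) : ℂ) = 1 := by
  have h := sin_pi4
  unfold cf
  have : ((Real.pi/2 : ℝ) : ℂ)/2 = ((Real.pi/4 : ℝ) : ℂ) := by push_cast; ring
  rw [this] at h ⊢
  rw [div_eq_one_iff_eq h, ← Complex.ofReal_sin, ← Complex.ofReal_cos, Real.sin_pi_div_four,
    Real.cos_pi_div_four]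

lemma cA_pi (N : ℕ) : cA (N+1) ((Real.pi/2 : ℝ) : ℂ) = Fintype.card (LemniscateTree (N+1)) := by
  simp only [cA, cs, cf_pi]
  norm_num

lemma zigzag : ∃ C : ℝ, ∀ N : ℕ,
    |Real.pi / 2 * Fintype.card (LemniscateTree (N+2)) -
      ((N:ℝ)+2) * Fintype.card (LemniscateTree (N+1))| ≤ (N+2).factorial * C / 4^(N+2) := by
  have hsub : Metric.closedBall ((Real.pi/2 : ℝ) : ℂ) 4 ⊆ Metric.ball ((Real.pi/2 : ℝ) : ℂ) (9/2) :=
    Metric.closedBall_subset_ball (by norm_num)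
  have hdc : DiffContOnCl ℂ ch (Metric.ball ((Real.pi/2 : ℝ) : ℂ) 4) :=
    DifferentiableOn.diffContOnCl_ball (ch_diff) hsub
  obtain ⟨C, hC⟩ := (isCompact_sphere ((Real.pi/2 : ℝ) : ℂ) 4).exists_bound_of_continuousOn
    (f := ch) (ch_diff.continuousOn.mono (Metric.sphere_subset_closedBall.trans hsub))
  refine ⟨C, fun N => ?_⟩
  have := Complex.norm_iteratedDeriv_le_of_forall_mem_sphere_norm_le (N+2) (by norm_num) hdc hC
  rw [ch_iter _ _ sin_pi4, norm_mul, norm_pow, norm_neg, norm_one, one_pow, one_mul,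
    show N + 2 - 1 = N + 1 from rfl, show N + 2 = (N+1)+1 from rfl, cA_pi, cA_pi] at this
  refine le_trans (le_of_eq ?_) this
  rw [← Real.norm_eq_abs, ← Complex.norm_real]
  congr 1
  push_cast
  ring

lemma card_ge (N : ℕ) : ((N+1).factorial : ℝ) / 2^N ≤ Fintype.card (LemniscateTree (N+1)) := by
  induction N with
  | zero =>
    have := sum_one (fun _ => (1:ℝ))
    simp only [Finset.sum_const, Finset.card_univ, nsmul_eq_mul, mul_one] at this
    rw [zero_add, this]; norm_num
  | succ n ih =>
    refine le_trans ?_ (card_rec_ge n)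
    have h := mul_le_mul_of_nonneg_left ih (show (0:ℝ) ≤ ((n:ℝ)+2)/2 by positivity)
    refine le_trans (le_of_eq ?_) h
    rw [Nat.factorial_succ (n+1)]
    push_cast
    field_simp
    ring

/-- ratio of consecutive cardinalities -/
noncomputable def rho (N : ℕ) : ℝ :=
  (Fintype.card (LemniscateTree (N+2)) : ℝ) / Fintype.card (LemniscateTree (N+1))

lemma rho_asymp : Tendsto (fun N : ℕ => rho N - 2 / Real.pi * ((N:ℝ)+2)) atTop (𝓝 0) := by
  obtain ⟨C, hC⟩ := zigzag
  have hC0 : 0 ≤ C := by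
    have h := (abs_nonneg _).trans (hC 0)
    by_contra hneg
    push Not at hneg
    have : ((0+2).factorial : ℝ) * C / 4^(0+2) < 0 := by
      norm_num [Nat.factorial]; linarith
    linarith
  have hb : ∀ N : ℕ, ‖rho N - 2 / Real.pi * ((N:ℝ)+2)‖ ≤ C * (((N:ℝ)+2) * (1/2)^N) := by
    intro N
    have hc := card_pos N
    have hg := card_ge N
    have h := hC N
    have hpi := Real.pi_gt_three
    have e1 : rho N - 2 / Real.pi * ((N:ℝ)+2) = (2 / Real.pi) *
      ((Real.pi / 2 * Fintype.card (LemniscateTree (N+2)) -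
      ((N:ℝ)+2) * Fintype.card (LemniscateTree (N+1))) / Fintype.card (LemniscateTree (N+1))) := by
      unfold rho; field_simp
    rw [e1, Real.norm_eq_abs, abs_mul, abs_of_pos (show 0 < 2 / Real.pi by positivity),
      abs_div _ (Fintype.card (LemniscateTree (N+1)) : ℝ), abs_of_pos hc]
    have e2 : 2 / Real.pi ≤ 1 := by rw [div_le_one (by positivity)]; linarith
    refine (mul_le_of_le_one_left (by positivity) e2).trans ?_
    rw [div_le_iff₀ hc]
    refine h.trans ?_
    have h3 : C * (((N:ℝ)+2) * (1/2)^N) * (((N+1).factorial : ℝ) / 2^N) ≤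
      C * (((N:ℝ)+2) * (1/2)^N) * Fintype.card (LemniscateTree (N+1)) :=
      mul_le_mul_of_nonneg_left hg (by positivity)
    refine le_trans ?_ h3
    rw [Nat.factorial_succ (N+1)]
    push_cast
    have h4 : (4:ℝ)^(N+2) = 16 * (2^N * 2^N) := by
      rw [pow_add, ← mul_pow]; norm_num; ring
    rw [h4, one_div, inv_pow]
    have : ((N:ℝ) + 1 + 1) * ((N+1).factorial:ℝ) * C / (16 * (2^N*2^N)) =
      (1/16) * (C * (((N:ℝ)+2) * (2^N)⁻¹) * (((N+1).factorial : ℝ) / 2^N)) := by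
      field_simp; ring
    rw [this]
    have : 0 ≤ C * (((N:ℝ)+2) * (2^N)⁻¹) * (((N+1).factorial : ℝ) / 2^N) := by positivity
    linarith
  apply squeeze_zero_norm hb
  have t1 := tendsto_self_mul_const_pow_of_lt_one (r := (1/2:ℝ)) (by norm_num) (by norm_num)
  have t2 := tendsto_pow_atTop_nhds_zero_of_lt_one (r := (1/2:ℝ)) (by norm_num) (by norm_num)
  have := (t1.add (t2.const_mul 2)).const_mul C
  simp only [mul_zero, add_zero] at this
  refine this.congr fun N => ?_
  ring

lemma var_formula (N : ℕ) :
    lemVar (N+1) = rho N * (rho (N+1) - rho N + 1) - ((N:ℝ) + 2) := by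
  have hc0 := card_pos N
  have hc1 := card_pos (N+1)
  set S1 := ∑ T : LemniscateTree (N+1), (outdegTwoCount T : ℝ) with hS1
  set S2 := ∑ T : LemniscateTree (N+1), (outdegTwoCount T : ℝ)^2 with hS2
  have r1 : (Fintype.card (LemniscateTree (N+2)) : ℝ) =
      ((N:ℝ)+1) * Fintype.card (LemniscateTree (N+1)) - S1 := by
    rw [card_rec, Finset.sum_sub_distrib]; simp [hS1]; ring
  have r2 : (Fintype.card (LemniscateTree (N+3)) : ℝ) =
      ((N:ℝ)+2) * Fintype.card (LemniscateTree (N+2)) -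
        ∑ T : LemniscateTree (N+2), (outdegTwoCount T : ℝ) := by
    rw [card_rec (N+1), Finset.sum_sub_distrib]; simp; ring
  have r3 : ∑ T : LemniscateTree (N+2), (outdegTwoCount T : ℝ) =
      (N:ℝ) * Fintype.card (LemniscateTree (N+1)) + ((N:ℝ) - 1) * S1 - S2 := by
    rw [sum_rec N (fun k => (k:ℝ))]
    have : ∀ T : LemniscateTree (N+1), ((outdegTwoCount T + 1) • (outdegTwoCount T : ℝ) +
      (N - 2 * outdegTwoCount T) • ((outdegTwoCount T + 1 : ℕ) : ℝ)) =
      (N:ℝ) + ((N:ℝ) - 1) * (outdegTwoCount T : ℝ) - (outdegTwoCount T : ℝ)^2 := by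
      intro T
      have h := two_count_le T
      simp only [nsmul_eq_mul]
      push_cast [h]
      ring
    simp only [this]
    rw [Finset.sum_sub_distrib, Finset.sum_add_distrib, ← Finset.mul_sum]
    simp [hS1, hS2]; ring
  have hm : lemMean (N+1) = S1 / Fintype.card (LemniscateTree (N+1)) := rfl
  have hv : lemVar (N+1) = (S2 - 2 * lemMean (N+1) * S1 +
      Fintype.card (LemniscateTree (N+1)) * lemMean (N+1)^2) /
      Fintype.card (LemniscateTree (N+1)) := by
    unfold lemVar
    congr 1
    simp only [sub_sq]
    rw [Finset.sum_add_distrib, Finset.sum_sub_distrib, hS1, hS2, Finset.mul_sum]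
    simp only [Finset.sum_const, Finset.card_univ, nsmul_eq_mul]
    congr 2
    refine Finset.sum_congr rfl fun T _ => by ring
  rw [hv, hm]
  unfold rho
  rw [r3] at r2
  have hS2e : S2 = (Fintype.card (LemniscateTree (N+3)) : ℝ) -
    ((N:ℝ)+2) * Fintype.card (LemniscateTree (N+2)) + (N:ℝ) * Fintype.card (LemniscateTree (N+1)) +
    ((N:ℝ) - 1) * S1 := by linarith
  have hS1e : S1 = ((N:ℝ)+1) * Fintype.card (LemniscateTree (N+1)) -
    Fintype.card (LemniscateTree (N+2)) := by linarith
  rw [hS2e, hS1e]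
  simp only [show N + 1 + 2 = N + 3 from rfl, show N + 1 + 1 = N + 2 from rfl] at hc1 ⊢
  field_simp
  ring

lemma var_lower : ∃ c : ℝ, 0 < c ∧ ∀ᶠ N : ℕ in atTop, c * ((N:ℝ) + 2) ≤ lemVar (N+1) := by
  have hpi : 0 < Real.pi := Real.pi_pos
  set a := 2 / Real.pi with ha
  have h0 := rho_asymp
  have h1 : Tendsto (fun N : ℕ => rho (N+1) - rho N) atTop (𝓝 a) := by
    have := ((h0.comp (tendsto_add_atTop_nat 1)).sub h0).add_const a
    simp only [sub_zero, zero_add] at this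
    refine this.congr fun N => ?_
    simp only [Function.comp]; push_cast; ring
  have hinv : Tendsto (fun N : ℕ => ((N:ℝ) + 2)⁻¹) atTop (𝓝 0) :=
    tendsto_inv_atTop_zero.comp (tendsto_atTop_add_const_right _ _ tendsto_natCast_atTop_atTop)
  have h2 : Tendsto (fun N : ℕ => rho N * ((N:ℝ) + 2)⁻¹) atTop (𝓝 a) := by
    have := (h0.mul hinv).add_const a
    simp only [mul_zero, zero_add] at this
    refine this.congr fun N => ?_
    have : (N:ℝ) + 2 ≠ 0 := by positivity
    rw [ha]; field_simp; ring
  have h3 : Tendsto (fun N : ℕ => lemVar (N+1) * ((N:ℝ) + 2)⁻¹) atTop (𝓝 (a * (a + 1) - 1)) := by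
    have := (h2.mul (h1.add_const 1)).sub_const 1
    refine this.congr fun N => ?_
    have : (N:ℝ) + 2 ≠ 0 := by positivity
    rw [var_formula]
    field_simp
  have hpos : 0 < a * (a + 1) - 1 := by
    have h1 := Real.pi_lt_d2
    have : 0.63 < a := by
      rw [ha, lt_div_iff₀ hpi]; linarith
    nlinarith
  refine ⟨(a * (a + 1) - 1)/2, by positivity, ?_⟩
  filter_upwards [h3.eventually (lt_mem_nhds (half_lt_self hpos))] with N hN
  have hN2 : (0:ℝ) < (N:ℝ) + 2 := by positivity
  rw [← div_eq_mul_inv, lt_div_iff₀ hN2] at hN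
  exact hN.le

open Polynomial in
lemma factor_list (m : Multiset ℝ) (hm : ∀ a ∈ m, a ≤ 0) : ∃ (n : ℕ) (p : Fin n → ℝ) (K : ℝ),
    (∀ i, 0 ≤ p i) ∧ (∀ i, p i ≤ 1) ∧ (m.map (fun a => X - C a)).prod = C K * BP p := by
  induction m using Multiset.induction_on with
  | empty => exact ⟨0, fun _ => 0, 1, by simp, by simp, by simp [BP]⟩
  | cons a m ih =>
    obtain ⟨n, p, K, h0, h1, h⟩ := ih fun b hb => hm b (by simp [hb])
    have ha : a ≤ 0 := hm a (by simp)
    have ha1 : 0 < 1 - a := by linarith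
    refine ⟨n+1, Fin.cons (1/(1-a)) p, (1-a) * K, ?_, ?_, ?_⟩
    · intro i
      refine Fin.cases ?_ ?_ i
      · simp; linarith
      · intro i; simpa using h0 i
    · intro i
      refine Fin.cases ?_ ?_ i
      · simp; apply inv_le_one_of_one_le₀; linarith
      · intro i; simpa using h1 i
    · have hb : BP (Fin.cons (1/(1-a)) p : Fin (n+1) → ℝ) = bf (1/(1-a)) * BP p := by
        simp [BP, Fin.prod_univ_succ]
      have hx : (X - C a : ℝ[X]) = C (1-a) * bf (1/(1-a)) := by
        rw [bf, mul_add, ← C_mul, ← mul_assoc, ← C_mul, mul_sub, mul_one_div_cancel ha1.ne']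
        simp; ring
      rw [Multiset.map_cons, Multiset.prod_cons, h, hb, hx, C_mul]
      ring

open Polynomial in
lemma factor (N : ℕ) : ∃ (n : ℕ) (p : Fin n → ℝ),
    (∀ i, 0 ≤ p i) ∧ (∀ i, p i ≤ 1) ∧
    Ppol N = C (Fintype.card (LemniscateTree (N+1)) : ℝ) * BP p := by
  have hs := (Ppol_splits N).eq_prod_roots
  obtain ⟨n, p, K, h0, h1, h⟩ := factor_list (Ppol N).roots (by
    intro a ha
    by_contra hneg
    push Not at hneg
    have h1 := Ppol_eval_pos N hneg
    have h2 : (Ppol N).eval a = 0 := isRoot_of_mem_roots ha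
    linarith)
  refine ⟨n, p, h0, h1, ?_⟩
  rw [h, ← mul_assoc, ← C_mul] at hs
  have he : (Ppol N).eval 1 = Fintype.card (LemniscateTree (N+1)) := by
    unfold Ppol; rw [eval_finsetSum]; simp
  have he2 := he
  rw [hs] at he2
  simp only [eval_mul, eval_C, BP_eval, mul_one] at he2
  rw [← he2]; exact hs

lemma expect (N : ℕ) : ∃ (n : ℕ) (p : Fin n → ℝ),
    (∀ i, 0 ≤ p i) ∧ (∀ i, p i ≤ 1) ∧
    ∀ h : ℕ → ℝ, (∑ T : LemniscateTree (N+1), h (outdegTwoCount T)) /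
      Fintype.card (LemniscateTree (N+1)) = LL h (BP p) := by
  obtain ⟨n, p, h0, h1, hp⟩ := factor N
  refine ⟨n, p, h0, h1, fun h => ?_⟩
  have : LL h (Ppol N) = ∑ T : LemniscateTree (N+1), h (outdegTwoCount T) := by
    unfold Ppol; rw [map_sum]; simp [LL_X_pow]
  rw [← this, hp, ← Polynomial.smul_eq_C_mul, map_smul, smul_eq_mul]
  have := card_pos N
  field_simp

lemma main_bound (N : ℕ) (hv : 0 < lemVar (N+1)) (x : ℝ) :
    |stdCDF (N+1) x - stdGaussianCDF x| ≤ (1 / Real.sqrt (lemVar (N+1))) * (3 + mr 0) := by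
  obtain ⟨n, p, h0, h1, hp⟩ := expect N
  have hm : lemMean (N+1) = ∑ i, p i := by
    rw [← bern_mean, ← hp]; rfl
  have hvar : lemVar (N+1) = ∑ i, p i * (1 - p i) := by
    rw [← bern_var, ← hp, ← hm]; rfl
  have hcdf : stdCDF (N+1) x = LL (fun k => if ((k:ℝ) - ∑ i, p i) / Real.sqrt (lemVar (N+1)) ≤ x
      then 1 else 0) (BP p) := by
    rw [← hp, ← hm, stdCDF]
    congr 1
    rw [Finset.sum_boole]
  rw [hcdf]
  exact stein_bern p h0 h1 _ (Real.sqrt_pos.2 hv) (by rw [Real.sq_sqrt hv.le, hvar]) x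

lemma stdCDF_mem (N : ℕ) (x : ℝ) : 0 ≤ stdCDF N x ∧ stdCDF N x ≤ 1 := by
  unfold stdCDF
  constructor
  · positivity
  · apply div_le_one_of_le₀ _ (by positivity)
    exact_mod_cast Finset.card_le_univ _

lemma speed : ∃ C : ℝ, 0 < C ∧ ∀ N : ℕ, 1 ≤ N → ∀ x : ℝ,
      |stdCDF N x - stdGaussianCDF x| ≤ C * (N : ℝ) ^ (-(1 : ℝ) / 2) := by
  obtain ⟨c, hc, hev⟩ := var_lower
  obtain ⟨N0, hN0⟩ := eventually_atTop.1 hev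
  have hmr := mr_pos 0
  refine ⟨(3 + mr 0) / Real.sqrt c + Real.sqrt (N0 + 1), by positivity, ?_⟩
  intro N hN x
  obtain ⟨M, rfl⟩ := Nat.exists_eq_add_of_le' hN
  have hpos : (0:ℝ) < ((M+1:ℕ):ℝ) := by positivity
  have hpw : ((M+1:ℕ):ℝ) ^ (-(1:ℝ)/2) = 1 / Real.sqrt ((M+1:ℕ):ℝ) := by
    rw [neg_div, Real.rpow_neg hpos.le, Real.sqrt_eq_rpow, one_div ((_:ℝ)^_)]
  rw [hpw, add_mul]
  have hsq : 0 < Real.sqrt ((M+1:ℕ):ℝ) := Real.sqrt_pos.2 hpos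
  rcases le_or_gt N0 M with h | h
  · have hv := hN0 M h
    have hv' : c * ((M+1:ℕ):ℝ) ≤ lemVar (M+1) := by
      refine le_trans ?_ hv
      apply mul_le_mul_of_nonneg_left _ hc.le
      push_cast; linarith
    have hvpos : 0 < lemVar (M+1) := lt_of_lt_of_le (by positivity) hv'
    refine (main_bound M hvpos x).trans ?_
    have h1 : Real.sqrt c * Real.sqrt ((M+1:ℕ):ℝ) ≤ Real.sqrt (lemVar (M+1)) := by
      rw [← Real.sqrt_mul hc.le]; exact Real.sqrt_le_sqrt hv'
    have h2 : 1 / Real.sqrt (lemVar (M+1)) ≤ 1 / (Real.sqrt c * Real.sqrt ((M+1:ℕ):ℝ)) :=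
      one_div_le_one_div_of_le (by positivity) h1
    have h3 : 0 ≤ Real.sqrt (N0 + 1) * (1 / Real.sqrt ((M+1:ℕ):ℝ)) := by positivity
    have h4 := mul_le_mul_of_nonneg_right h2 (show 0 ≤ 3 + mr 0 by positivity)
    have h5 : 1 / (Real.sqrt c * Real.sqrt ((M+1:ℕ):ℝ)) * (3 + mr 0) =
      (3 + mr 0) / Real.sqrt c * (1 / Real.sqrt ((M+1:ℕ):ℝ)) := by field_simp
    linarith
  · have h1 : |stdCDF (M+1) x - stdGaussianCDF x| ≤ 1 := by
      have a := stdCDF_mem (M+1) x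
      have b := Phi_pos x
      have d := Phi_lt_one x
      rw [abs_le]; constructor <;> linarith [a.1, a.2]
    have h2 : 1 ≤ Real.sqrt (N0 + 1) * (1 / Real.sqrt ((M+1:ℕ):ℝ)) := by
      rw [mul_one_div, le_div_iff₀ hsq, one_mul]
      apply Real.sqrt_le_sqrt
      have : M + 1 ≤ N0 + 1 := by omega
      exact_mod_cast this
    have h3 : 0 ≤ (3 + mr 0) / Real.sqrt c * (1 / Real.sqrt ((M+1:ℕ):ℝ)) := by positivity
    linarith

end LemAux

/-- the standardized number of outdegree-two vertices converges in
distribution to a standard Gaussian, with Kolmogorov-distance speed `O(N^{-1/2})`. -/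
theorem outdegTwo_gaussian_limit :
    (∀ x : ℝ, Filter.Tendsto (fun N : ℕ => stdCDF N x) Filter.atTop
        (nhds (stdGaussianCDF x))) ∧
    ∃ C : ℝ, 0 < C ∧ ∀ N : ℕ, 1 ≤ N → ∀ x : ℝ,
      |stdCDF N x - stdGaussianCDF x| ≤ C * (N : ℝ) ^ (-(1 : ℝ) / 2) := by
  obtain ⟨C, hC, h⟩ := LemAux.speed
  refine ⟨fun x => ?_, C, hC, h⟩
  rw [tendsto_iff_norm_sub_tendsto_zero]
  have h0 : Filter.Tendsto (fun N : ℕ => C * (N : ℝ) ^ (-(1 : ℝ) / 2)) Filter.atTop (nhds 0) := by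
    have h1 := (tendsto_rpow_neg_atTop (y := 1/2) (by norm_num)).comp
      (tendsto_natCast_atTop_atTop (R := ℝ))
    have h2 := h1.const_mul C
    rw [mul_zero] at h2
    refine h2.congr fun N => ?_
    simp only [Function.comp]
    norm_num
  apply squeeze_zero' (Filter.Eventually.of_forall fun N => norm_nonneg _) _ h0
  filter_upwards [Filter.eventually_ge_atTop 1] with N hN
  exact h N hN x
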